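/- Let T and S be bounded linear operators on H each admitting an A-adjoint. Then ω_A(TS) ≤ (1/2) · ( ω_A(ST) + ‖T‖_A · ‖S‖_A ). -/

import Mathlib

noncomputable section

open ContinuousLinearMap

variable {H : Type*} [NormedAddCommGroup H] [InnerProductSpace ℂ H] [CompleteSpace H]

/-- The semi-inner product induced by the positive operator `A`: `⟨x, y⟩_A := ⟨A x, y⟩`. -/
def innA (A : H →L[ℂ] H) (x y : H) : ℂ := inner ℂ (A x) y

/-- The seminorm induced by `A`: `‖x‖_A := ⟨x, x⟩_A ^ (1/2)`. -/
def vnormA (A : H →L[ℂ] H) (x : H) : ℝ := Real.sqrt (innA A x x).re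

/-- The `A`-operator seminorm: `‖T‖_A := sup {‖T x‖_A : ‖x‖_A = 1}`. -/
def opNormA (A T : H →L[ℂ] H) : ℝ :=
  sSup {c : ℝ | ∃ x : H, vnormA A x = 1 ∧ c = vnormA A (T x)}

/-- The `A`-numerical radius: `ω_A(T) := sup {|⟨T x, x⟩_A| : ‖x‖_A = 1}`. -/
def wA (A T : H →L[ℂ] H) : ℝ :=
  sSup {c : ℝ | ∃ x : H, vnormA A x = 1 ∧ c = ‖innA A (T x) x‖}

/-- `T` admits an `A`-adjoint: there is a bounded operator `X` with `A X = T* A`. -/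
def HasAAdjoint (A T : H →L[ℂ] H) : Prop :=
  ∃ X : H →L[ℂ] H, A ∘L X = adjoint T ∘L A

/-- `X` is the reduced `A`-adjoint `T^{♯_A}` of `T`: it solves `A X = T* A` and its range
is contained in the closure of the range of `A`. -/
def IsReducedAAdjoint (A T X : H →L[ℂ] H) : Prop :=
  (A ∘L X = adjoint T ∘L A) ∧ ∀ y : H, X y ∈ closure (Set.range A)

section SemiInner

variable {E : Type*} [SeminormedAddCommGroup E] [InnerProductSpace ℂ E]

/-- The formal adjoint of a bounded linear map satisfies the same bound. -/
theorem norm_formalAdjoint_le {T X : E →ₗ[ℂ] E}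
    (hTX : ∀ x y, inner ℂ (T x) y = inner ℂ x (X y)) {t : ℝ} (ht : 0 ≤ t)
    (hT : ∀ x, ‖T x‖ ≤ t * ‖x‖) (x : E) : ‖X x‖ ≤ t * ‖x‖ := by
  rcases (norm_nonneg (X x)).eq_or_lt with h | h
  · rw [← h]; positivity
  · have h1 : ‖X x‖ ^ 2 = (inner ℂ (T (X x)) x).re := by
      rw [hTX]; exact (inner_self_eq_norm_sq (𝕜 := ℂ) (X x)).symm
    have h2 : (inner ℂ (T (X x)) x).re ≤ ‖T (X x)‖ * ‖x‖ :=
      re_inner_le_norm (𝕜 := ℂ) _ _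
    have h3 := mul_le_mul_of_nonneg_right (hT (X x)) (norm_nonneg x)
    nlinarith

/-- If the quadratic form of a symmetric map `P` is nonnegative and at most `k ‖x‖ ^ 2`, then
`‖P x‖ ^ 2 ≤ k ⟨P x, x⟩`. -/
theorem norm_sq_le_of_symmetric_of_nonneg {P : E →ₗ[ℂ] E}
    (hP : ∀ x y, inner ℂ (P x) y = inner ℂ x (P y))
    (hP0 : ∀ x, 0 ≤ (inner ℂ (P x) x).re) {k : ℝ} (hk : 0 < k)
    (hPk : ∀ x, (inner ℂ (P x) x).re ≤ k * ‖x‖ ^ 2) (x : E) :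
    ‖P x‖ ^ 2 ≤ k * (inner ℂ (P x) x).re := by
  have h := hP0 (((k : ℝ) : ℂ) • x - P x)
  have h1 := hPk (P x)
  have e : (inner ℂ (P (((k : ℝ) : ℂ) • x - P x)) (((k : ℝ) : ℂ) • x - P x)).re
      = k ^ 2 * (inner ℂ (P x) x).re - 2 * k * ‖P x‖ ^ 2 + (inner ℂ (P (P x)) (P x)).re := by
    have e1 : (inner ℂ (P x) (P x)).re = ‖P x‖ ^ 2 := inner_self_eq_norm_sq (𝕜 := ℂ) (P x)
    rw [← e1]
    simp only [map_sub, map_smul, inner_sub_left, inner_sub_right, inner_smul_left,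
      inner_smul_right, Complex.conj_ofReal, hP (P x) x, Complex.sub_re, Complex.re_ofReal_mul]
    ring
  rw [e] at h
  have : 0 ≤ k * (k * (inner ℂ (P x) x).re - ‖P x‖ ^ 2) := by nlinarith
  have := nonneg_of_mul_nonneg_right this hk
  linarith

/-- Estimate on a vector `x` in terms of its defect `p` from being an eigenvector of the real part
of `T S` with eigenvalue `l`. -/
theorem re_inner_comp_le_defect {T X S Y : E →ₗ[ℂ] E}
    (hTX : ∀ x y, inner ℂ (T x) y = inner ℂ x (X y))
    (hSY : ∀ x y, inner ℂ (S x) y = inner ℂ x (Y y))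
    {t s w l : ℝ} (ht : 0 < t) (hs : 0 < s)
    (hT : ∀ x, ‖T x‖ ≤ t * ‖x‖) (hS : ∀ x, ‖S x‖ ≤ s * ‖x‖)
    (hw : ∀ x, ‖inner ℂ (S (T x)) x‖ ≤ w * ‖x‖ ^ 2)
    (hl : (w + t * s) / 2 ≤ l) (x p : E)
    (hp : T (S x) + Y (X x) = ((2 * l : ℝ) : ℂ) • x - ((2 : ℝ) : ℂ) • p) :
    (l - (w + t * s) / 2) * (inner ℂ (T (S x)) x).re ≤ t * s * (‖x‖ * ‖p‖) := by
  have hX := norm_formalAdjoint_le hTX ht.le hT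
  have hY := norm_formalAdjoint_le hSY hs.le hS
  have eS : (inner ℂ (S (T (S x))) (S x)).re + (inner ℂ (S (Y (X x))) (S x)).re
      = 2 * l * ‖S x‖ ^ 2 - 2 * (inner ℂ (S p) (S x)).re := by
    have e1 : (inner ℂ (S x) (S x)).re = ‖S x‖ ^ 2 := inner_self_eq_norm_sq (𝕜 := ℂ) (S x)
    rw [← Complex.add_re, ← inner_add_left, ← map_add, hp, ← e1]
    simp only [map_sub, map_smul, inner_sub_left, inner_smul_left, Complex.conj_ofReal,
      Complex.sub_re, Complex.re_ofReal_mul]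
  have eX : (inner ℂ (X (T (S x))) (X x)).re + (inner ℂ (X (Y (X x))) (X x)).re
      = 2 * l * ‖X x‖ ^ 2 - 2 * (inner ℂ (X p) (X x)).re := by
    have e1 : (inner ℂ (X x) (X x)).re = ‖X x‖ ^ 2 := inner_self_eq_norm_sq (𝕜 := ℂ) (X x)
    rw [← Complex.add_re, ← inner_add_left, ← map_add, hp, ← e1]
    simp only [map_sub, map_smul, inner_sub_left, inner_smul_left, Complex.conj_ofReal,
      Complex.sub_re, Complex.re_ofReal_mul]
  have b1 : (inner ℂ (S (T (S x))) (S x)).re ≤ w * ‖S x‖ ^ 2 :=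
    (Complex.re_le_norm _).trans (hw _)
  have b2 : (inner ℂ (X (Y (X x))) (X x)).re ≤ w * ‖X x‖ ^ 2 := by
    refine (Complex.re_le_norm _).trans (le_trans (le_of_eq ?_) (hw (X x)))
    rw [hSY, hTX, norm_inner_symm]
  have b3 : (inner ℂ (S (Y (X x))) (S x)).re ≤ s ^ 2 * (‖S x‖ * ‖X x‖) := by
    have h1 : (inner ℂ (S (Y (X x))) (S x)).re ≤ ‖S (Y (X x))‖ * ‖S x‖ :=
      re_inner_le_norm (𝕜 := ℂ) _ _
    have h2 : ‖S (Y (X x))‖ ≤ s * (s * ‖X x‖) :=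
      (hS _).trans (mul_le_mul_of_nonneg_left (hY _) hs.le)
    nlinarith [mul_le_mul_of_nonneg_right h2 (norm_nonneg (S x))]
  have b4 : (inner ℂ (X (T (S x))) (X x)).re ≤ t ^ 2 * (‖S x‖ * ‖X x‖) := by
    have h1 : (inner ℂ (X (T (S x))) (X x)).re ≤ ‖X (T (S x))‖ * ‖X x‖ :=
      re_inner_le_norm (𝕜 := ℂ) _ _
    have h2 : ‖X (T (S x))‖ ≤ t * (t * ‖S x‖) :=
      (hX _).trans (mul_le_mul_of_nonneg_left (hT _) ht.le)
    nlinarith [mul_le_mul_of_nonneg_right h2 (norm_nonneg (X x))]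
  have c1 : (inner ℂ (S p) (S x)).re ≤ s ^ 2 * (‖x‖ * ‖p‖) := by
    have h1 : (inner ℂ (S p) (S x)).re ≤ ‖S p‖ * ‖S x‖ := re_inner_le_norm (𝕜 := ℂ) _ _
    have h2 := mul_le_mul (hS p) (hS x) (norm_nonneg _) (by positivity)
    linarith
  have c2 : (inner ℂ (X p) (X x)).re ≤ t ^ 2 * (‖x‖ * ‖p‖) := by
    have h1 : (inner ℂ (X p) (X x)).re ≤ ‖X p‖ * ‖X x‖ := re_inner_le_norm (𝕜 := ℂ) _ _
    have h2 := mul_le_mul (hX p) (hX x) (norm_nonneg _) (by positivity)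
    linarith
  have d : (inner ℂ (T (S x)) x).re ≤ ‖S x‖ * ‖X x‖ := by
    rw [hTX]; exact re_inner_le_norm (𝕜 := ℂ) _ _
  have t2 : 0 ≤ t ^ 2 := by positivity
  have s2 : 0 ≤ s ^ 2 := by positivity
  have main : (l - (w + t * s) / 2) * (t ^ 2 * ‖S x‖ ^ 2 + s ^ 2 * ‖X x‖ ^ 2)
      ≤ 2 * t ^ 2 * s ^ 2 * (‖x‖ * ‖p‖) := by
    have hsq := mul_nonneg (mul_nonneg ht.le hs.le) (sq_nonneg (t * ‖S x‖ - s * ‖X x‖))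
    nlinarith [mul_le_mul_of_nonneg_left b1 t2, mul_le_mul_of_nonneg_left b3 t2,
      mul_le_mul_of_nonneg_left c1 t2, mul_le_mul_of_nonneg_left b2 s2,
      mul_le_mul_of_nonneg_left b4 s2, mul_le_mul_of_nonneg_left c2 s2,
      congrArg (t ^ 2 * ·) eS, congrArg (s ^ 2 * ·) eX]
  have hl' : 0 ≤ l - (w + t * s) / 2 := by linarith
  have low : 2 * (t * s) * (inner ℂ (T (S x)) x).re
      ≤ t ^ 2 * ‖S x‖ ^ 2 + s ^ 2 * ‖X x‖ ^ 2 := by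
    nlinarith [sq_nonneg (t * ‖S x‖ - s * ‖X x‖), mul_le_mul_of_nonneg_left d (mul_pos ht hs).le]
  have hts : 0 < 2 * (t * s) := by positivity
  refine le_of_mul_le_mul_left ?_ hts
  nlinarith [mul_le_mul_of_nonneg_left low hl']

/-- `Re ⟨T S x, x⟩ ≤ (w + t s) / 2 * ‖x‖ ^ 2`, obtained from approximate eigenvectors of the real
part of `T S` at the top of its numerical range. -/
theorem re_inner_comp_le {T X S Y : E →ₗ[ℂ] E}
    (hTX : ∀ x y, inner ℂ (T x) y = inner ℂ x (X y))
    (hSY : ∀ x y, inner ℂ (S x) y = inner ℂ x (Y y))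
    {t s w : ℝ} (ht : 0 < t) (hs : 0 < s) (hw0 : 0 ≤ w)
    (hT : ∀ x, ‖T x‖ ≤ t * ‖x‖) (hS : ∀ x, ‖S x‖ ≤ s * ‖x‖)
    (hw : ∀ x, ‖inner ℂ (S (T x)) x‖ ≤ w * ‖x‖ ^ 2) (x : E) :
    (inner ℂ (T (S x)) x).re ≤ (w + t * s) / 2 * ‖x‖ ^ 2 := by
  have hts : 0 < t * s := mul_pos ht hs
  have hTS : ∀ x, ‖inner ℂ (T (S x)) x‖ ≤ t * s * ‖x‖ ^ 2 := fun x => by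
    have h1 : ‖inner ℂ (T (S x)) x‖ ≤ ‖T (S x)‖ * ‖x‖ := norm_inner_le_norm _ _
    have h2 : ‖T (S x)‖ ≤ t * (s * ‖x‖) :=
      (hT _).trans (mul_le_mul_of_nonneg_left (hS _) ht.le)
    nlinarith [mul_le_mul_of_nonneg_right h2 (norm_nonneg x)]
  let C : Set ℝ := {c | 0 ≤ c ∧ ∀ x, (inner ℂ (T (S x)) x).re ≤ c * ‖x‖ ^ 2}
  have hC : C.Nonempty := ⟨t * s, hts.le, fun x => (Complex.re_le_norm _).trans (hTS x)⟩
  have hCb : BddBelow C := ⟨0, fun c hc => hc.1⟩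
  have hl : sInf C ∈ C := by
    refine IsClosed.csInf_mem ?_ hC hCb
    have hCeq : C = Set.Ici 0 ∩ ⋂ x, {c | (inner ℂ (T (S x)) x).re ≤ c * ‖x‖ ^ 2} := by
      ext c; simp [C]
    rw [hCeq]
    exact isClosed_Ici.inter
      (isClosed_iInter fun x => isClosed_le continuous_const (by fun_prop))
  set l := sInf C
  suffices h : l ≤ (w + t * s) / 2 from
    (hl.2 x).trans (mul_le_mul_of_nonneg_right h (by positivity))
  by_contra! hlt
  have hl0 : 0 < l := by linarith
  let P : E →ₗ[ℂ] E := ((l : ℝ) : ℂ) • LinearMap.id - ((1 / 2 : ℝ) : ℂ) • (T ∘ₗ S + Y ∘ₗ X)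
  have hPx : ∀ x, P x = ((l : ℝ) : ℂ) • x - ((1 / 2 : ℝ) : ℂ) • (T (S x) + Y (X x)) :=
    fun x => rfl
  have hXT : ∀ x y, inner ℂ (X x) y = inner ℂ x (T y) := fun x y => by
    rw [← inner_conj_symm, ← hTX, inner_conj_symm]
  have hYS : ∀ x y, inner ℂ (Y x) y = inner ℂ x (S y) := fun x y => by
    rw [← inner_conj_symm, ← hSY, inner_conj_symm]
  have hP : ∀ x y, inner ℂ (P x) y = inner ℂ x (P y) := fun x y => by
    simp only [hPx, inner_sub_left, inner_sub_right, inner_smul_left, inner_smul_right,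
      inner_add_left, inner_add_right, Complex.conj_ofReal, hTX, hSY, hYS, hXT]
    ring
  have hPq : ∀ x, (inner ℂ (P x) x).re = l * ‖x‖ ^ 2 - (inner ℂ (T (S x)) x).re := fun x => by
    have e1 : (inner ℂ x x).re = ‖x‖ ^ 2 := inner_self_eq_norm_sq (𝕜 := ℂ) x
    have e2 : (inner ℂ (Y (X x)) x).re = (inner ℂ (T (S x)) x).re := by
      rw [hYS, hXT, ← inner_conj_symm, Complex.conj_re]
    simp only [hPx, inner_sub_left, inner_smul_left, inner_add_left, Complex.conj_ofReal,
      Complex.sub_re, Complex.add_re, Complex.re_ofReal_mul, e1, e2]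
    ring
  have hPb := norm_sq_le_of_symmetric_of_nonneg hP (k := l + t * s)
    (fun x => by rw [hPq]; linarith [hl.2 x]) (by positivity)
    (fun x => by
      rw [hPq]; linarith [(abs_le.1 ((Complex.abs_re_le_norm _).trans (hTS x))).1])
  set m := l - (w + t * s) / 2
  have hm0 : 0 < m := sub_pos.2 hlt
  have key : ∀ d, 0 < d → d ≤ l → (m * (l - d)) ^ 2 ≤ (t * s) ^ 2 * ((l + t * s) * d) := by
    intro d hd hdl
    have hn : l - d ∉ C := notMem_of_lt_csInf (by linarith) hCb
    have : ∃ x, (l - d) * ‖x‖ ^ 2 < (inner ℂ (T (S x)) x).re := by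
      by_contra! h
      exact hn ⟨by linarith, h⟩
    obtain ⟨x, hx⟩ := this
    have hx0 : 0 < ‖x‖ := by
      rcases (norm_nonneg x).eq_or_lt with h | h
      · have := (Complex.re_le_norm _).trans (hTS x)
        rw [← h] at hx this
        norm_num at hx this
        linarith
      · exact h
    have h1 : m * (inner ℂ (T (S x)) x).re ≤ t * s * (‖x‖ * ‖P x‖) :=
      re_inner_comp_le_defect hTX hSY ht hs hT hS hw hlt.le x (P x) (by
      rw [hPx, smul_sub, smul_smul, smul_smul, ← Complex.ofReal_mul, ← Complex.ofReal_mul]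
      norm_num)
    have h2 := hPb x
    rw [hPq] at h2
    have h3 : m * (l - d) * ‖x‖ ≤ t * s * ‖P x‖ := by
      refine le_of_mul_le_mul_right ?_ hx0
      linarith [mul_le_mul_of_nonneg_left hx.le hm0.le]
    have h4 : ‖P x‖ ^ 2 ≤ (l + t * s) * d * ‖x‖ ^ 2 := by
      have : 0 < l + t * s := by positivity
      nlinarith
    have h5 := pow_le_pow_left₀
      (mul_nonneg (mul_nonneg hm0.le (sub_nonneg.2 hdl)) hx0.le) h3 2
    refine le_of_mul_le_mul_right ?_ (pow_pos hx0 2)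
    nlinarith [mul_le_mul_of_nonneg_left h4 (sq_nonneg (t * s))]
  have hlim : (m * (l - 0)) ^ 2 ≤ (t * s) ^ 2 * ((l + t * s) * 0) := by
    have hc1 : ContinuousWithinAt (fun d : ℝ => (m * (l - d)) ^ 2) (Set.Ioi 0) 0 := by fun_prop
    have hc2 : ContinuousWithinAt (fun d : ℝ => (t * s) ^ 2 * ((l + t * s) * d)) (Set.Ioi 0) 0 := by
      fun_prop
    refine le_of_tendsto_of_tendsto hc1 hc2 ?_
    filter_upwards [Ioc_mem_nhdsGT hl0] with d hd using key d hd.1 hd.2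
  have : 0 < (m * l) ^ 2 := by positivity
  norm_num at hlim this
  rcases hlim with h | h <;> linarith

/-- `|⟨T S x, x⟩| ≤ (w + t s) / 2 * ‖x‖ ^ 2`, where `w` bounds the numerical radius of `S T` and
`t`, `s` bound the norms of `T`, `S`. -/
theorem norm_inner_comp_le {T X S Y : E →ₗ[ℂ] E}
    (hTX : ∀ x y, inner ℂ (T x) y = inner ℂ x (X y))
    (hSY : ∀ x y, inner ℂ (S x) y = inner ℂ x (Y y))
    {t s w : ℝ} (ht : 0 ≤ t) (hs : 0 ≤ s) (hw0 : 0 ≤ w)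
    (hT : ∀ x, ‖T x‖ ≤ t * ‖x‖) (hS : ∀ x, ‖S x‖ ≤ s * ‖x‖)
    (hw : ∀ x, ‖inner ℂ (S (T x)) x‖ ≤ w * ‖x‖ ^ 2) (x : E) :
    ‖inner ℂ (T (S x)) x‖ ≤ (w + t * s) / 2 * ‖x‖ ^ 2 := by
  have h1 : ‖inner ℂ (T (S x)) x‖ ≤ ‖T (S x)‖ * ‖x‖ := norm_inner_le_norm _ _
  have h2 : ‖T (S x)‖ ≤ t * (s * ‖x‖) := (hT _).trans (mul_le_mul_of_nonneg_left (hS _) ht)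
  rcases ht.eq_or_lt with h0 | ht
  · rw [← h0] at h2 ⊢
    nlinarith [mul_le_mul_of_nonneg_right h2 (norm_nonneg x), mul_nonneg hw0 (sq_nonneg ‖x‖)]
  rcases hs.eq_or_lt with h0 | hs
  · rw [← h0] at h2 ⊢
    nlinarith [mul_le_mul_of_nonneg_right h2 (norm_nonneg x), mul_nonneg hw0 (sq_nonneg ‖x‖)]
  obtain ⟨c, hc, hcz⟩ := Complex.exists_norm_mul_eq_self (inner ℂ (T (S x)) x)
  have hSY' : ∀ x y, inner ℂ ((c • S) x) y = inner ℂ x ((starRingEnd ℂ c • Y) y) := fun x y => by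
    simp [inner_smul_left, inner_smul_right, hSY]
  have h := re_inner_comp_le hTX hSY' ht hs hw0 hT
    (fun x => by simpa [norm_smul, hc] using hS x)
    (fun x => by simpa [inner_smul_left, hc] using hw x) x
  have e : inner ℂ (T ((c • S) x)) x = (‖inner ℂ (T (S x)) x‖ : ℂ) := by
    have hcc : starRingEnd ℂ c * c = 1 := by simp [Complex.conj_mul', hc]
    simp only [LinearMap.smul_apply, map_smul, inner_smul_left]
    conv_lhs => rw [← hcz]
    rw [← mul_assoc, hcc, one_mul]
  rwa [e, Complex.ofReal_re] at h

end SemiInner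

/-- A log-convex sequence bounded by a multiple of `k ^ n` has initial ratio at most `k`. -/
theorem le_mul_of_logConvex_of_le_mul_pow {a : ℕ → ℝ} (ha : ∀ n, 0 ≤ a n)
    (hlc : ∀ n, a (n + 1) ^ 2 ≤ a n * a (n + 2)) {C k : ℝ} (hk : 0 < k)
    (hb : ∀ n, a n ≤ C * k ^ n) : a 1 ≤ k * a 0 := by
  by_contra! h
  rcases (ha 0).eq_or_lt with h0 | h0
  · have := hlc 0
    rw [← h0] at this h
    norm_num at this
    rw [this] at h
    norm_num at h
  have hr : k < a 1 / a 0 := by rwa [lt_div_iff₀ h0]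
  set r := a 1 / a 0
  have hr0 : 0 < r := hk.trans hr
  have step : ∀ n, 0 < a n ∧ r * a n ≤ a (n + 1) := by
    intro n
    induction n with
    | zero => exact ⟨h0, by simp [r, h0.ne']⟩
    | succ n ih =>
      have hpos : 0 < a (n + 1) := (mul_pos hr0 ih.1).trans_le ih.2
      refine ⟨hpos, le_of_mul_le_mul_left ?_ ih.1⟩
      nlinarith [hlc n, mul_le_mul_of_nonneg_right ih.2 hpos.le]
  have grow : ∀ n, r ^ n * a 0 ≤ a n := by
    intro n
    induction n with
    | zero => simp
    | succ n ih =>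
      refine le_trans ?_ (step n).2
      rw [pow_succ']
      nlinarith
  obtain ⟨n, hn⟩ := pow_unbounded_of_one_lt (C / a 0) ((one_lt_div hk).2 hr)
  rw [div_pow, div_lt_div_iff₀ h0 (by positivity)] at hn
  linarith [grow n, hb n]

/-- The semi-inner product structure induced by a positive operator. -/
abbrev semiInnerCore (A : H →L[ℂ] H) (hA : A.IsPositive) : PreInnerProductSpace.Core ℂ H where
  inner := innA A
  conj_inner_symm x y := by
    rw [innA, innA, inner_conj_symm]
    exact (hA.isSymmetric x y).symm
  re_inner_nonneg x := hA.re_inner_nonneg_left x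
  add_left x y z := by simp [innA]
  smul_left x y r := by simp [innA, mul_comm]

theorem innA_eq_of_adjoint {A T X : H →L[ℂ] H} (hA : A.IsPositive)
    (h : A ∘L X = adjoint T ∘L A) (x y : H) : innA A (T x) y = innA A x (X y) := by
  have h' : A (X y) = adjoint T (A y) := congrArg (· y) h
  have e1 : inner ℂ (A (T x)) y = inner ℂ (T x) (A y) := hA.isSymmetric _ _
  have e2 : inner ℂ (A x) (X y) = inner ℂ x (A (X y)) := hA.isSymmetric _ _
  rw [innA, innA, e1, e2, h', adjoint_inner_right]

theorem vnormA_nonneg (A : H →L[ℂ] H) (x : H) : 0 ≤ vnormA A x :=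
  Real.sqrt_nonneg _

theorem vnormA_sq {A : H →L[ℂ] H} (hA : A.IsPositive) (x : H) :
    vnormA A x ^ 2 = (innA A x x).re :=
  Real.sq_sqrt (hA.re_inner_nonneg_left x)

theorem norm_innA_le {A : H →L[ℂ] H} (hA : A.IsPositive) (x y : H) :
    ‖innA A x y‖ ≤ vnormA A x * vnormA A y := by
  let := semiInnerCore A hA
  exact InnerProductSpace.Core.norm_inner_le_norm (𝕜 := ℂ) x y

theorem vnormA_smul (A : H →L[ℂ] H) (c : ℂ) (x : H) :
    vnormA A (c • x) = ‖c‖ * vnormA A x := by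
  have : innA A (c • x) (c • x) = ((‖c‖ ^ 2 : ℝ) : ℂ) * innA A x x := by
    simp only [innA, map_smul, inner_smul_left, inner_smul_right]
    rw [← mul_assoc, Complex.mul_conj']
    norm_num
  rw [vnormA, vnormA, this, Complex.re_ofReal_mul, Real.sqrt_mul (sq_nonneg _),
    Real.sqrt_sq (norm_nonneg _)]

theorem vnormA_le (A : H →L[ℂ] H) (x : H) : vnormA A x ≤ √‖A‖ * ‖x‖ := by
  rw [← Real.sqrt_sq (norm_nonneg x), ← Real.sqrt_mul (norm_nonneg A), vnormA]
  refine Real.sqrt_le_sqrt ((Complex.re_le_norm _).trans ?_)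
  have h1 : ‖innA A x x‖ ≤ ‖A x‖ * ‖x‖ := norm_inner_le_norm _ _
  nlinarith [mul_le_mul_of_nonneg_right (A.le_opNorm x) (norm_nonneg x)]

/-- An operator admitting an `A`-adjoint is bounded for the seminorm induced by `A`. -/
theorem HasAAdjoint.exists_vnormA_le {A T : H →L[ℂ] H} (hA : A.IsPositive)
    (hT : HasAAdjoint A T) : ∃ c, 0 ≤ c ∧ ∀ x, vnormA A (T x) ≤ c * vnormA A x := by
  obtain ⟨X, hX⟩ := hT
  have hTX := innA_eq_of_adjoint hA hX
  have hconj : ∀ x y, starRingEnd ℂ (innA A x y) = innA A y x := fun x y =>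
    (semiInnerCore A hA).conj_inner_symm y x
  let N : H →L[ℂ] H := X * T
  have hN : ∀ x y, innA A (N x) y = innA A x (N y) := fun x y => by
    change innA A (X (T x)) y = innA A x (X (T y))
    rw [← hconj, ← hTX, hconj, hTX]
  have hNb : ∀ x, vnormA A (N x) ≤ (‖N‖ + 1) * vnormA A x := fun x => by
    refine le_mul_of_logConvex_of_le_mul_pow (a := fun n => vnormA A ((N ^ n) x))
      (fun n => Real.sqrt_nonneg _) (fun n => ?_) (C := √‖A‖ * ‖x‖) (by positivity) (fun n => ?_)
    · have e : innA A ((N ^ (n + 1)) x) ((N ^ (n + 1)) x)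
          = innA A ((N ^ n) x) ((N ^ (n + 2)) x) := by
        rw [pow_succ' N (n + 1), pow_succ' N n]
        exact hN _ _
      rw [vnormA_sq hA, e]
      exact (Complex.re_le_norm _).trans (norm_innA_le hA _ _)
    · refine (vnormA_le A _).trans ?_
      rw [mul_assoc]
      refine mul_le_mul_of_nonneg_left ?_ (Real.sqrt_nonneg _)
      have h1 : ‖(N ^ n) x‖ ≤ ‖N‖ ^ n * ‖x‖ := by
        induction n with
        | zero => simp
        | succ n ih =>
          rw [pow_succ', pow_succ' ‖N‖, mul_assoc ‖N‖]
          exact (N.le_opNorm _).trans (mul_le_mul_of_nonneg_left ih (norm_nonneg _))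
      have h2 : ‖N‖ ^ n ≤ (‖N‖ + 1) ^ n := pow_le_pow_left₀ (norm_nonneg _) (by linarith) n
      nlinarith [mul_le_mul_of_nonneg_right h2 (norm_nonneg x)]
  refine ⟨√(‖N‖ + 1), Real.sqrt_nonneg _, fun x => ?_⟩
  refine (sq_le_sq₀ (vnormA_nonneg _ _)
    (mul_nonneg (Real.sqrt_nonneg _) (vnormA_nonneg _ _))).1 ?_
  rw [mul_pow, Real.sq_sqrt (by positivity), vnormA_sq hA, hTX]
  have h1 := (Complex.re_le_norm _).trans (norm_innA_le hA x (N x))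
  have h2 := mul_le_mul_of_nonneg_left (hNb x) (vnormA_nonneg A x)
  change (innA A x (N x)).re ≤ _
  nlinarith

theorem opNormA_nonneg (A T : H →L[ℂ] H) : 0 ≤ opNormA A T :=
  Real.sSup_nonneg fun _ ⟨_, _, h⟩ => h ▸ Real.sqrt_nonneg _

theorem wA_nonneg (A T : H →L[ℂ] H) : 0 ≤ wA A T :=
  Real.sSup_nonneg fun _ ⟨_, _, h⟩ => h ▸ norm_nonneg _

theorem vnormA_inv_smul {A : H →L[ℂ] H} {x : H} (hx : 0 < vnormA A x) :
    vnormA A (((vnormA A x)⁻¹ : ℂ) • x) = 1 := by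
  rw [vnormA_smul, norm_inv, Complex.norm_of_nonneg hx.le, inv_mul_cancel₀ hx.ne']

theorem vnormA_apply_le_opNormA {A T : H →L[ℂ] H} {c : ℝ}
    (h : ∀ x, vnormA A (T x) ≤ c * vnormA A x) (x : H) :
    vnormA A (T x) ≤ opNormA A T * vnormA A x := by
  rcases (vnormA_nonneg A x).eq_or_lt with h0 | h0
  · exact (h x).trans_eq (by simp [← h0])
  have hb : BddAbove {c : ℝ | ∃ x : H, vnormA A x = 1 ∧ c = vnormA A (T x)} :=
    ⟨c, by rintro _ ⟨y, hy, rfl⟩; simpa [hy] using h y⟩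
  have := le_csSup hb ⟨_, vnormA_inv_smul h0, rfl⟩
  rw [map_smul, vnormA_smul, norm_inv, Complex.norm_of_nonneg h0.le, inv_mul_le_iff₀ h0] at this
  rwa [mul_comm]

theorem norm_innA_le_wA {A T : H →L[ℂ] H} (hA : A.IsPositive) {c : ℝ}
    (h : ∀ x, vnormA A (T x) ≤ c * vnormA A x) (x : H) :
    ‖innA A (T x) x‖ ≤ wA A T * vnormA A x ^ 2 := by
  rcases (vnormA_nonneg A x).eq_or_lt with h0 | h0
  · exact (norm_innA_le hA (T x) x).trans_eq (by simp [← h0])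
  have hb : BddAbove {c : ℝ | ∃ x : H, vnormA A x = 1 ∧ c = ‖innA A (T x) x‖} :=
    ⟨c, by
      rintro _ ⟨y, hy, rfl⟩
      simpa [hy] using (norm_innA_le hA (T y) y).trans
        (mul_le_mul_of_nonneg_right (h y) (vnormA_nonneg A y))⟩
  have := le_csSup hb ⟨_, vnormA_inv_smul h0, rfl⟩
  have e : ‖innA A (T (((vnormA A x)⁻¹ : ℂ) • x)) (((vnormA A x)⁻¹ : ℂ) • x)‖
      = (vnormA A x ^ 2)⁻¹ * ‖innA A (T x) x‖ := by
    simp only [innA, map_smul, inner_smul_left, inner_smul_right, norm_mul, RCLike.norm_conj,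
      norm_inv, Complex.norm_of_nonneg h0.le]
    ring
  rw [e, inv_mul_le_iff₀ (pow_pos h0 2)] at this
  rwa [mul_comm]

theorem stmt3 (A : H →L[ℂ] H) (hA : A.IsPositive) (hA0 : A ≠ 0)
    (T S : H →L[ℂ] H) (hT : HasAAdjoint A T) (hS : HasAAdjoint A S) :
    wA A (T * S) ≤ (1 / 2) * (wA A (S * T) + opNormA A T * opNormA A S) := by
  obtain ⟨t, -, hTt⟩ := hT.exists_vnormA_le hA
  obtain ⟨s, hs, hSs⟩ := hS.exists_vnormA_le hA
  obtain ⟨X, hX⟩ := hT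
  obtain ⟨Y, hY⟩ := hS
  have hST : ∀ x, vnormA A ((S * T) x) ≤ s * t * vnormA A x := fun x =>
    (hSs (T x)).trans (by rw [mul_assoc]; exact mul_le_mul_of_nonneg_left (hTt x) hs)
  have h0 : 0 ≤ (1 / 2) * (wA A (S * T) + opNormA A T * opNormA A S) :=
    mul_nonneg (by norm_num) (add_nonneg (wA_nonneg _ _)
      (mul_nonneg (opNormA_nonneg _ _) (opNormA_nonneg _ _)))
  refine Real.sSup_le ?_ h0
  rintro _ ⟨x, hx, rfl⟩
  have key := @norm_inner_comp_le H
    (@InnerProductSpace.Core.toSeminormedAddCommGroup ℂ H _ _ _ (semiInnerCore A hA))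
    (@InnerProductSpace.ofCore ℂ H _ _ _ (semiInnerCore A hA))
    T.toLinearMap X.toLinearMap S.toLinearMap Y.toLinearMap
    (innA_eq_of_adjoint hA hX) (innA_eq_of_adjoint hA hY)
    (opNormA A T) (opNormA A S) (wA A (S * T))
    (opNormA_nonneg _ _) (opNormA_nonneg _ _) (wA_nonneg _ _)
    (vnormA_apply_le_opNormA hTt) (vnormA_apply_le_opNormA hSs)
    (norm_innA_le_wA hA hST) x
  change ‖innA A (T (S x)) x‖ ≤ _ * vnormA A x ^ 2 at key
  rw [hx] at key
  change ‖innA A (T (S x)) x‖ ≤ _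
  linarith
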